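/- Let α > 0, Λ > 1, ε ∈ (0,1), K ≥ 1, L > 0 and m ∈ ℕ. Let x₁, …, x_K ∈ ℝ^d be points such that every cluster at scale Lε contains at least two elements, and let (X₁, …, X_K) be centered jointly Gaussian real random variables whose covariance R(i,j) := E(X_i X_j) satisfies R(i,j) ≥ ε^α/(Λ(|x_i−x_j|_s+ε)^α) and R(i,j) ≤ Λε^α/(|x_i−x_j|_s+ε)^α for all i, j. Then (Λ(KL+1)^α)^{−⌊(m+1)/2⌋·K} ≤ E ∏_{j=1}^{K} (X_j^{⋄m} + X_j^{⋄(m+1)}). -/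

import Mathlib

open MeasureTheory ProbabilityTheory Filter

noncomputable section

def anorm {d : ℕ} (s : Fin d → ℝ) (x : Fin d → ℝ) : ℝ :=
  ∑ j, |x j| ^ (1 / s j)

def IsCenteredGaussianFamily {Ω ι : Type*} [MeasurableSpace Ω] (P : Measure Ω)
    (X : ι → Ω → ℝ) : Prop :=
  ∀ (A : Finset ι) (c : ι → ℝ), ∃ v : NNReal,
    Measure.map (fun ω => ∑ i ∈ A, c i * X i ω) P = gaussianReal 0 v

def wick (v : ℝ) (n : ℕ) (x : ℝ) : ℝ :=
  Real.sqrt v ^ n * Polynomial.aeval (x / Real.sqrt v) (Polynomial.hermite n)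

def SameCluster {d K : ℕ} (s : Fin d → ℝ) (δ : ℝ) (x : Fin K → Fin d → ℝ) :
    Fin K → Fin K → Prop :=
  Relation.ReflTransGen fun i j => anorm s (x i - x j) ≤ δ

/-!
Gaussian integration by parts in one factor of a Wick moment cancels the contractions of this factor
with itself, which leaves the recursion

  `E[Xᵢ^{⋄(nᵢ+1)} ∏_{j≠i} Xⱼ^{⋄nⱼ}]
    = ∑_{j≠i} nⱼ R(i,j) E[Xᵢ^{⋄nᵢ} Xⱼ^{⋄(nⱼ-1)} ∏_{k≠i,j} Xₖ^{⋄nₖ}]`.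

If `R ≥ 0`, then all Wick moments are nonnegative, so the expanded product dominates its term in
which every exponent is the even number among `m` and `m + 1`, say `2M`. This moment in turn
dominates the contribution of any single pairing. Since no cluster is a singleton, some permutation
`σ` moves every index within its cluster, and pairing `i` with `σ i`, `M` times for each `i`,
contributes `∏ᵢ R(i, σ i)^M`. Clusters have diameter at most `KLε`, which bounds `R(i, σ i)` below.
-/

section GaussianIntegrationByParts

theorem integrable_gaussianReal_iff {m : ℝ} {v : NNReal} (hv : v ≠ 0) {f : ℝ → ℝ} :
    Integrable f (gaussianReal m v) ↔ Integrable fun x => gaussianPDFReal m v x * f x := by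
  rw [gaussianReal_of_var_ne_zero _ hv, integrable_withDensity_iff_integrable_smul'
    (measurable_gaussianPDF _ _) (ae_of_all _ fun _ => gaussianPDF_lt_top)]
  simp only [toReal_gaussianPDF, smul_eq_mul]

theorem hasDerivAt_gaussianPDFReal (m : ℝ) (v : NNReal) (x : ℝ) :
    HasDerivAt (gaussianPDFReal m v) (-((x - m) / v) * gaussianPDFReal m v x) x := by
  have hexponent : HasDerivAt (fun y : ℝ => -(y - m) ^ 2 / (2 * (v : ℝ))) (-((x - m) / v)) x :=
    ((((hasDerivAt_id x).sub_const m).pow 2).neg.div_const (2 * (v : ℝ))).congr_deriv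
      (by simp only [id_eq]; ring)
  rw [gaussianPDFReal_def]
  exact (hexponent.exp.const_mul _).congr_deriv (by ring)

theorem integral_sub_mul_gaussianReal {m : ℝ} {v : NNReal} {f f' : ℝ → ℝ}
    (hf : ∀ x, HasDerivAt f (f' x) x) (hfi : Integrable f (gaussianReal m v))
    (hf'i : Integrable f' (gaussianReal m v))
    (hmul : Integrable (fun x => (x - m) * f x) (gaussianReal m v)) :
    ∫ x, (x - m) * f x ∂gaussianReal m v = v * ∫ x, f' x ∂gaussianReal m v := by
  rcases eq_or_ne v 0 with rfl | hv
  · simp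
  have hderiv : ∀ x, HasDerivAt (fun y => gaussianPDFReal m v y * f y)
      (gaussianPDFReal m v x * (f' x - (v : ℝ)⁻¹ * ((x - m) * f x))) x := fun x =>
    ((hasDerivAt_gaussianPDFReal m v x).mul (hf x)).congr_deriv (by ring)
  have hzero : ∫ x, (f' x - (v : ℝ)⁻¹ * ((x - m) * f x)) ∂gaussianReal m v = 0 := by
    rw [integral_gaussianReal_eq_integral_smul hv]
    exact integral_eq_zero_of_hasDerivAt_of_integrable hderiv
      ((integrable_gaussianReal_iff hv).1 (hf'i.sub (hmul.const_mul _)))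
      ((integrable_gaussianReal_iff hv).1 hfi)
  rw [integral_sub hf'i (hmul.const_mul _), integral_const_mul, sub_eq_zero] at hzero
  rw [hzero, mul_inv_cancel_left₀ (NNReal.coe_ne_zero.2 hv)]

theorem hasDerivAt_comp_add_smul {E : Type*} [AddCommGroup E] [Module ℝ E] {F : E → ℝ}
    {F' t : ℝ} {y c : E} (hF : HasLineDerivAt ℝ F F' (y + t • c) c) :
    HasDerivAt (fun u : ℝ => F (y + u • c)) F' t := by
  have hshift : HasDerivAt (fun u : ℝ => F (y + t • c + (u - t) • c)) F' t :=
    HasDerivAt.comp_sub_const t t (by rwa [sub_self])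
  simpa only [add_assoc, ← add_smul, add_sub_cancel] using hshift

variable {E : Type*} [NormedAddCommGroup E] [NormedSpace ℝ E] [MeasurableSpace E] [BorelSpace E]
  [SecondCountableTopology E] [CompleteSpace E] {μ : Measure E} [IsGaussian μ]
  {L : StrongDual ℝ E} {c : E}

theorem indepFun_regression_residual (hc : ∀ M : StrongDual ℝ E, M c = cov[L, M; μ])
    (hL : Var[L; μ] ≠ 0) :
    IndepFun L (fun x => x - (L x / Var[L; μ]) • c) μ := by
  let R : E →L[ℝ] E := .id ℝ E - (Var[L; μ]⁻¹ • L).smulRight c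
  have hR : ∀ x, R x = x - (L x / Var[L; μ]) • c := fun x => by
    simp [R, div_eq_inv_mul]
  have memLp_dual : ∀ M : StrongDual ℝ E, MemLp M 2 μ := fun M =>
    IsGaussian.memLp_dual μ M 2 (by simp)
  have hindep : IndepFun L R μ := by
    refine HasGaussianLaw.indepFun_of_covariance_strongDual
      (IsGaussian.hasGaussianLaw_id.map (L.prod R)) fun l₁ l₂ => ?_
    have hl₁ : ∀ y, l₁ y = l₁ 1 * y := fun y => by
      rw [mul_comm, ← smul_eq_mul, ← map_smul]; simp
    have hl₂ : ∀ x, l₂ (R x) = l₂ x - l₂ c * Var[L; μ]⁻¹ * L x := fun x => by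
      rw [hR, map_sub, map_smul, smul_eq_mul]; ring
    have hcov₂ : cov[L, l₂ ∘ R; μ] = 0 := by
      have hfun : ⇑l₂ ∘ ⇑R = fun x => l₂ x - l₂ c * Var[L; μ]⁻¹ * L x := funext hl₂
      rw [hfun, covariance_fun_sub_right (memLp_dual L) (memLp_dual l₂)
        ((memLp_dual L).const_mul _), covariance_const_mul_right, covariance_self
        L.measurable.aemeasurable, hc]
      field_simp
      ring
    have hfun : ⇑l₁ ∘ ⇑L = fun x => l₁ 1 * L x := funext fun x => hl₁ (L x)
    rw [hfun, covariance_const_mul_left, hcov₂, mul_zero]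
  exact hindep.congr .rfl (.of_forall hR)

theorem measurePreserving_regression_resample (hc : ∀ M : StrongDual ℝ E, M c = cov[L, M; μ])
    (hL : Var[L; μ] ≠ 0) :
    MeasurePreserving (fun p : ℝ × E => p.2 + ((p.1 - L p.2) / Var[L; μ]) • c)
      ((μ.map L).prod μ) μ := by
  let R : E → E := fun x => x - (L x / Var[L; μ]) • c
  have hL_meas : Measurable L := L.measurable
  have hR_meas : Measurable R := by fun_prop
  have hlaw : μ.map (fun x => (L x, R x)) = (μ.map L).prod (μ.map R) :=
    (indepFun_iff_map_prod_eq_prod_map_map hL_meas.aemeasurable hR_meas.aemeasurable).1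
      (indepFun_regression_residual hc hL)
  refine ⟨by fun_prop, ?_⟩
  calc ((μ.map L).prod μ).map (fun p => p.2 + ((p.1 - L p.2) / Var[L; μ]) • c)
      = (((μ.map L).prod μ).map (Prod.map id R)).map (fun p => p.2 + (p.1 / Var[L; μ]) • c) := by
        rw [Measure.map_map (by fun_prop) (by fun_prop)]
        refine congrArg (Measure.map · _) (funext fun p => ?_)
        change _ = (p.2 - (L p.2 / Var[L; μ]) • c) + (p.1 / Var[L; μ]) • c
        rw [sub_div, sub_smul]
        abel
    _ = (μ.map fun x => (L x, R x)).map (fun p => p.2 + (p.1 / Var[L; μ]) • c) := by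
        have : IsProbabilityMeasure (μ.map L) := Measure.isProbabilityMeasure_map (by fun_prop)
        rw [hlaw, ← Measure.map_prod_map _ _ measurable_id hR_meas, Measure.map_id]
    _ = μ := by
        rw [Measure.map_map (by fun_prop) (by fun_prop)]
        exact (congrArg (Measure.map · μ) (funext fun x => sub_add_cancel _ _)).trans Measure.map_id

theorem integrable_and_integral_eq_of_regression_resample {G : E → ℝ}
    (hc : ∀ M : StrongDual ℝ E, M c = cov[L, M; μ]) (hL : Var[L; μ] ≠ 0) (hG : Integrable G μ) :
    (∀ᵐ y ∂μ, Integrable (fun z => G (y + ((z - L y) / Var[L; μ]) • c)) (μ.map L)) ∧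
      ∫ x, G x ∂μ = ∫ y, ∫ z, G (y + ((z - L y) / Var[L; μ]) • c) ∂μ.map L ∂μ := by
  have : IsProbabilityMeasure (μ.map L) := Measure.isProbabilityMeasure_map (by fun_prop)
  have hT := measurePreserving_regression_resample hc hL
  have hGT := hT.integrable_comp_of_integrable hG
  refine ⟨hGT.prod_left_ae, ?_⟩
  calc ∫ x, G x ∂μ
      = ∫ p, G (p.2 + ((p.1 - L p.2) / Var[L; μ]) • c) ∂(μ.map L).prod μ := by
        rw [← integral_map hT.aemeasurable (hT.map_eq.symm ▸ hG.aestronglyMeasurable), hT.map_eq]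
    _ = _ := integral_prod_symm _ hGT

theorem integral_sub_mul_eq_integral_lineDeriv {F F' : E → ℝ}
    (hc : ∀ M : StrongDual ℝ E, M c = cov[L, M; μ])
    (hF : ∀ x, HasLineDerivAt ℝ F (F' x) x c) (hFi : Integrable F μ) (hF'i : Integrable F' μ)
    (hmul : Integrable (fun x => (L x - μ[L]) * F x) μ) :
    ∫ x, (L x - μ[L]) * F x ∂μ = ∫ x, F' x ∂μ := by
  rcases eq_or_ne Var[L; μ] 0 with hL | hL
  · have hvanish : ∀ G : E → ℝ, ∫ x, (L x - μ[L]) * G x ∂μ = 0 := fun G =>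
      integral_eq_zero_of_ae
        ((ae_eq_integral_of_variance_eq_zero (IsGaussian.memLp_dual μ L 2 (by simp)) hL).mono
          fun x hx => by simp [hx])
    have hc_zero : c = 0 := SeparatingDual.eq_zero_of_forall_dual_eq_zero (R := ℝ) fun M =>
      (hc M).trans (hvanish _)
    have hF' : ∀ x, F' x = 0 := fun x => (hF x).unique (hc_zero ▸ hasLineDerivAt_zero)
    simp only [hF', integral_zero, hvanish]
  -- Conditionally on the regression residual only the Gaussian scalar `L x` varies, and along it
  -- the claim is the one-dimensional integration by parts.
  have hLT : ∀ y z, L (y + ((z - L y) / Var[L; μ]) • c) = z := fun y z => by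
    simp [hc, covariance_self L.measurable.aemeasurable, hL]
  have hderiv : ∀ y z, HasDerivAt (fun w => F (y + ((w - L y) / Var[L; μ]) • c))
      (F' (y + ((z - L y) / Var[L; μ]) • c) / Var[L; μ]) z := fun y z =>
    (HasDerivAt.comp (h₂ := fun u : ℝ => F (y + u • c)) z (hasDerivAt_comp_add_smul (hF _))
      (((hasDerivAt_id z).sub_const (L y)).div_const Var[L; μ])).congr_deriv (mul_one_div _ _)
  have hlaw : μ.map L = gaussianReal μ[L] Var[L; μ].toNNReal :=
    (IsGaussian.hasGaussianLaw_id.map L).map_eq_gaussianReal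
  obtain ⟨hFi_slice, -⟩ := integrable_and_integral_eq_of_regression_resample hc hL hFi
  obtain ⟨hF'i_slice, hF'_fubini⟩ := integrable_and_integral_eq_of_regression_resample hc hL hF'i
  obtain ⟨hmul_slice, hmul_fubini⟩ := integrable_and_integral_eq_of_regression_resample hc hL hmul
  rw [hmul_fubini, hF'_fubini]
  refine integral_congr_ae ?_
  filter_upwards [hmul_slice, hFi_slice, hF'i_slice] with y hmul_y hFi_y hF'i_y
  simp only [hLT, hlaw] at hmul_y hFi_y hF'i_y ⊢
  rw [integral_sub_mul_gaussianReal (hderiv y) hFi_y (hF'i_y.div_const _) hmul_y,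
    integral_div, Real.coe_toNNReal _ (variance_nonneg _ _), mul_div_cancel₀ _ hL]

end GaussianIntegrationByParts

section MvPolynomial

open MvPolynomial

theorem hasLineDerivAt_eval {𝕜 ι : Type*} [NontriviallyNormedField 𝕜] [Fintype ι]
    (p : MvPolynomial ι 𝕜) (x c : ι → 𝕜) :
    HasLineDerivAt 𝕜 (fun y => eval y p) (∑ j, c j * eval x (pderiv j p)) x c := by
  classical
  induction p using MvPolynomial.induction_on with
  | C a => simpa [HasLineDerivAt] using hasDerivAt_const (0 : 𝕜) a
  | add p q hp hq =>
    simpa only [HasLineDerivAt, map_add, mul_add, Finset.sum_add_distrib] using hp.fun_add hq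
  | mul_X p i hp =>
    have hcoord : HasDerivAt (fun t : 𝕜 => x i + t * c i) (c i) 0 := by
      simpa using ((hasDerivAt_id (0 : 𝕜)).mul_const (c i)).const_add (x i)
    simp only [HasLineDerivAt, map_mul, eval_X, Pi.add_apply, Pi.smul_apply, smul_eq_mul]
    refine (HasDerivAt.fun_mul hp hcoord).congr_deriv ?_
    have hpderiv : ∀ j, eval x (pderiv j (p * X i)) =
        eval x (pderiv j p) * x i + eval x p * (Pi.single j 1 : ι → 𝕜) i := fun j => by
      rw [pderiv_mul, pderiv_X, Pi.single_apply, Pi.single_apply]; split_ifs <;> simp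
    simp only [hpderiv, mul_add, Finset.sum_add_distrib, ← mul_assoc, ← Finset.sum_mul]
    simp [Pi.single_apply, mul_comm]

theorem memLp_eval {Ω ι : Type*} [MeasurableSpace Ω] {P : Measure Ω} [IsFiniteMeasure P]
    {X : ι → Ω → ℝ} (hX : ∀ i (q : NNReal), MemLp (X i) q P) (p : MvPolynomial ι ℝ) (q : NNReal) :
    MemLp (fun ω => eval (fun i => X i ω) p) q P := by
  induction p using MvPolynomial.induction_on generalizing q with
  | C a => simpa using memLp_const a
  | add p r hp hr => simpa only [map_add] using! (hp q).add (hr q)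
  | mul_X p i hp =>
    have hholder : ENNReal.HolderTriple ↑(2 * q) ↑(2 * q) q := ⟨by
      rw [ENNReal.coe_mul, ENNReal.mul_inv (by simp) (by simp), ← add_mul]
      simp [ENNReal.inv_two_add_inv_two]⟩
    simpa only [map_mul, eval_X] using (hX i (2 * q)).mul' (hp (2 * q))

variable {ι : Type*} {μ : Measure (ι → ℝ)} [IsGaussian μ]

theorem memLp_eval_of_isGaussian (p : MvPolynomial ι ℝ) (q : NNReal) :
    MemLp (fun x => eval x p) q μ :=
  memLp_eval (X := fun i (x : ι → ℝ) => x i)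
    (fun i q => (IsGaussian.hasGaussianLaw_id.eval i).memLp (by simp)) p q

theorem integrable_eval_of_isGaussian (p : MvPolynomial ι ℝ) : Integrable (fun x => eval x p) μ :=
  memLp_one_iff_integrable.1 (memLp_eval_of_isGaussian p 1)

theorem dual_covariance_eval [Finite ι] (i : ι) (M : StrongDual ℝ (ι → ℝ)) :
    M (fun j => cov[fun x => x i, fun x => x j; μ]) = cov[fun x => x i, M; μ] := by
  classical
  cases nonempty_fintype ι
  have hcoord : ∀ j, MemLp (fun x : ι → ℝ => x j) 2 μ := fun j => by
    simpa using memLp_eval_of_isGaussian (X j) 2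
  have hM : ⇑M = fun x => ∑ j, x j * M (fun k => if j = k then 1 else 0) :=
    funext M.pi_apply_eq_sum_univ
  rw [hM, covariance_fun_sum_right (fun j => (hcoord j).mul_const _) (hcoord i)]
  simp only [covariance_mul_const_right]

theorem integral_sub_mul_eval_eq_sum [Fintype ι] (i : ι) (p : MvPolynomial ι ℝ) :
    ∫ x, (x i - ∫ y, y i ∂μ) * eval x p ∂μ =
      ∑ j, cov[fun x => x i, fun x => x j; μ] * ∫ x, eval x (pderiv j p) ∂μ := by
  let c : ι → ℝ := fun j => cov[fun x => x i, fun x => x j; μ]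
  have hmul : Integrable (fun x => (x i - ∫ y, y i ∂μ) * eval x p) μ :=
    (integrable_eval_of_isGaussian ((X i - C (∫ y, y i ∂μ)) * p)).congr
      (.of_forall fun x => by simp)
  calc ∫ x, (x i - ∫ y, y i ∂μ) * eval x p ∂μ
      = ∫ x, ∑ j, c j * eval x (pderiv j p) ∂μ :=
        integral_sub_mul_eq_integral_lineDeriv (L := .proj i) (dual_covariance_eval i)
          (fun x => hasLineDerivAt_eval p x c) (integrable_eval_of_isGaussian p)
          (integrable_finsetSum _ fun j _ => (integrable_eval_of_isGaussian _).const_mul _)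
          hmul
    _ = ∑ j, c j * ∫ x, eval x (pderiv j p) ∂μ := by
        rw [integral_finsetSum _ fun j _ => (integrable_eval_of_isGaussian _).const_mul _]
        simp only [integral_const_mul]

end MvPolynomial

section WickPolynomial

open Polynomial

variable {R : Type*} [CommRing R]

/-- The Wick power `X^{⋄n}` of a centered variable of variance `v`, as a polynomial in `X`: the
probabilists' Hermite polynomial rescaled to `v`, given by a recursion in which no square root of
`v` enters, so that `v = 0` is allowed. -/
def wickPolynomial (v : R) : ℕ → R[X]
  | 0 => 1
  | n + 1 => X * wickPolynomial v n - C v * derivative (wickPolynomial v n)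

theorem derivative_wickPolynomial_succ (v : R) (n : ℕ) :
    derivative (wickPolynomial v (n + 1)) = C (n + 1 : R) * wickPolynomial v n := by
  induction n with
  | zero => simp [wickPolynomial]
  | succ n ih =>
    have hrec : wickPolynomial v (n + 1) =
      X * wickPolynomial v n - C v * derivative (wickPolynomial v n) := rfl
    rw [wickPolynomial, ih]
    simp only [derivative_sub, derivative_mul, derivative_X, derivative_C, derivative_natCast,
      derivative_one, ih, map_add, map_natCast, map_one, Nat.cast_add, Nat.cast_one]
    linear_combination -((n : R[X]) + 1) * hrec

theorem derivative_wickPolynomial (v : R) (n : ℕ) :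
    derivative (wickPolynomial v n) = C (n : R) * wickPolynomial v (n - 1) := by
  cases n with
  | zero => simp [wickPolynomial]
  | succ n => simpa using derivative_wickPolynomial_succ v n

theorem wickPolynomial_sq_comp (σ : R) (n : ℕ) :
    (wickPolynomial (σ ^ 2) n).comp (C σ * X) =
      C σ ^ n * (hermite n).map (Int.castRingHom R) := by
  induction n with
  | zero => simp [wickPolynomial]
  | succ n ih =>
    have hderiv : C σ * (derivative (wickPolynomial (σ ^ 2) n)).comp (C σ * X) =
        C σ ^ n * (derivative (hermite n)).map (Int.castRingHom R) := by
      have h := congrArg derivative ih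
      rwa [derivative_comp, derivative_C_mul, derivative_X, mul_one, ← C_pow, derivative_C_mul,
        derivative_map, C_pow] at h
    rw [wickPolynomial, hermite_succ]
    simp only [sub_comp, mul_comp, X_comp, C_comp, pow_comp, ih, Polynomial.map_sub,
      Polynomial.map_mul, map_X, C_pow]
    linear_combination (-C σ) * hderiv

theorem wick_eq_eval_wickPolynomial {v : ℝ} (hv : 0 < v) (n : ℕ) (x : ℝ) :
    wick v n x = (wickPolynomial v n).eval x := by
  have hσ : √v ≠ 0 := (Real.sqrt_pos.2 hv).ne'
  have h := congrArg (Polynomial.eval (x / √v)) (wickPolynomial_sq_comp √v n)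
  rw [Real.sq_sqrt hv.le, Polynomial.eval_comp] at h
  simpa [wick, mul_div_cancel₀ x hσ, Polynomial.eval_map, Polynomial.aeval_def] using h.symm

end WickPolynomial

section WickMonomial

open MvPolynomial

variable {R ι : Type*} [CommRing R]

theorem pderiv_toMvPolynomial_self (i : ι) (f : Polynomial R) :
    pderiv i (f.toMvPolynomial i) = (Polynomial.derivative f).toMvPolynomial i := by
  rw [Polynomial.toMvPolynomial, Derivation.map_aeval, pderiv_X_self, smul_eq_mul, mul_one]

theorem pderiv_prod_toMvPolynomial_of_notMem {i : ι} {A : Finset ι} (hi : i ∉ A)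
    (f : ι → Polynomial R) : pderiv i (∏ j ∈ A, (f j).toMvPolynomial j) = 0 := by
  refine Finset.prod_induction _ (fun p => pderiv i p = 0) (fun p q hp hq => ?_) pderiv_one
    fun j hj => ?_
  · rw [pderiv_mul, hp, hq, zero_mul, mul_zero, add_zero]
  · rw [Polynomial.toMvPolynomial, Derivation.map_aeval,
      pderiv_X_of_ne (ne_of_mem_of_not_mem hj hi), smul_zero]

variable [Fintype ι]

/-- The Wick monomial `∏ⱼ Xⱼ^{⋄nⱼ}` in variables of variances `vⱼ`, as a polynomial. -/
def wickMonomial (v : ι → R) (n : ι → ℕ) : MvPolynomial ι R :=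
  ∏ j, (wickPolynomial (v j) (n j)).toMvPolynomial j

theorem eval_wickMonomial (v : ι → R) (n : ι → ℕ) (x : ι → R) :
    eval x (wickMonomial v n) = ∏ j, (wickPolynomial (v j) (n j)).eval (x j) := by
  simp only [wickMonomial, map_prod, eval_toMvPolynomial]

variable [DecidableEq ι]

theorem wickMonomial_eq_mul_prod_erase {n n' : ι → ℕ} {i : ι} (h : ∀ j ≠ i, n' j = n j)
    (v : ι → R) :
    wickMonomial v n' = (wickPolynomial (v i) (n' i)).toMvPolynomial i *
      ∏ j ∈ Finset.univ.erase i, (wickPolynomial (v j) (n j)).toMvPolynomial j := by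
  rw [wickMonomial, ← Finset.mul_prod_erase _ _ (Finset.mem_univ i)]
  congr 1
  exact Finset.prod_congr rfl fun j hj => by rw [h j (Finset.ne_of_mem_erase hj)]

theorem pderiv_wickMonomial_eq_mul_prod_erase (v : ι → R) (n : ι → ℕ) (i : ι) :
    pderiv i (wickMonomial v n) =
      (Polynomial.derivative (wickPolynomial (v i) (n i))).toMvPolynomial i *
        ∏ j ∈ Finset.univ.erase i, (wickPolynomial (v j) (n j)).toMvPolynomial j := by
  rw [wickMonomial_eq_mul_prod_erase (i := i) (fun _ _ => rfl) v, pderiv_mul,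
    pderiv_toMvPolynomial_self, pderiv_prod_toMvPolynomial_of_notMem (Finset.notMem_erase i _),
    mul_zero, add_zero]

theorem pderiv_wickMonomial (v : ι → R) (n : ι → ℕ) (i : ι) :
    pderiv i (wickMonomial v n) = C (n i : R) * wickMonomial v (n - Pi.single i 1) := by
  rw [pderiv_wickMonomial_eq_mul_prod_erase, wickMonomial_eq_mul_prod_erase (n := n) (i := i)
    (fun j hj => by simp [hj]), derivative_wickPolynomial, map_mul, Polynomial.toMvPolynomial_C,
    mul_assoc, Pi.sub_apply, Pi.single_eq_same]

theorem wickMonomial_add_single (v : ι → R) (n : ι → ℕ) (i : ι) :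
    wickMonomial v (n + Pi.single i 1) =
      X i * wickMonomial v n - C (v i) * pderiv i (wickMonomial v n) := by
  rw [pderiv_wickMonomial_eq_mul_prod_erase, wickMonomial_eq_mul_prod_erase (n := n) (i := i)
    (fun j hj => by simp [hj]), wickMonomial_eq_mul_prod_erase (i := i) (fun _ _ => rfl) v,
    Pi.add_apply, Pi.single_eq_same, wickPolynomial, map_sub, map_mul, map_mul,
    Polynomial.toMvPolynomial_X, Polynomial.toMvPolynomial_C]
  ring

end WickMonomial

section WickMoment

open MvPolynomial

variable {ι : Type*} [Fintype ι]

/-- The moment `E ∏ⱼ Xⱼ^{⋄nⱼ}` of Wick powers of the coordinates of a random vector of law `μ`, each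
coordinate being renormalized by its variance under `μ`. -/
def wickMoment (μ : Measure (ι → ℝ)) (n : ι → ℕ) : ℝ :=
  ∫ x, eval x (wickMonomial (fun j => Var[fun y => y j; μ]) n) ∂μ

variable {μ : Measure (ι → ℝ)}

theorem wickMoment_zero [IsProbabilityMeasure μ] : wickMoment μ 0 = 1 := by
  simp [wickMoment, eval_wickMonomial, wickPolynomial]

variable [IsGaussian μ]

theorem wickMoment_add_single [DecidableEq ι] (hmean : ∀ i, ∫ x, x i ∂μ = 0) (n : ι → ℕ) (i : ι) :
    wickMoment μ (n + Pi.single i 1) = ∑ j ∈ Finset.univ.erase i,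
      cov[fun x => x i, fun x => x j; μ] * (n j * wickMoment μ (n - Pi.single j 1)) := by
  let W : (ι → ℕ) → MvPolynomial ι ℝ := wickMonomial fun j => Var[fun y => y j; μ]
  let D : ι → ℝ := fun j =>
    cov[fun x => x i, fun x => x j; μ] * ∫ x, eval x (pderiv j (W n)) ∂μ
  have hX : ∫ x, eval x (X i * W n) ∂μ = ∑ j, D j := by
    simpa [hmean] using integral_sub_mul_eval_eq_sum (μ := μ) i (W n)
  have hdiag : ∫ x, eval x (C Var[fun y => y i; μ] * pderiv i (W n)) ∂μ = D i := by
    simp only [eval_mul, eval_C, integral_const_mul, D]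
    rw [covariance_self (measurable_pi_apply i).aemeasurable]
  calc wickMoment μ (n + Pi.single i 1)
      = ∫ x, (eval x (X i * W n) - eval x (C Var[fun y => y i; μ] * pderiv i (W n))) ∂μ := by
        simp only [wickMoment, wickMonomial_add_single, eval_sub, W]
    _ = ∑ j ∈ Finset.univ.erase i, D j := by
        rw [integral_sub (integrable_eval_of_isGaussian _) (integrable_eval_of_isGaussian _), hX,
          hdiag, ← Finset.add_sum_erase _ _ (Finset.mem_univ i), add_sub_cancel_left]
    _ = _ := Finset.sum_congr rfl fun j _ => by
        simp only [D, W, pderiv_wickMonomial, eval_mul, eval_C, integral_const_mul, wickMoment]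

theorem wickMoment_nonneg (hmean : ∀ i, ∫ x, x i ∂μ = 0)
    (hcov : ∀ i j, 0 ≤ cov[fun x => x i, fun x => x j; μ]) (n : ι → ℕ) : 0 ≤ wickMoment μ n := by
  classical
  induction n using WellFoundedLT.induction with
  | ind n ih =>
  rcases eq_or_ne n 0 with rfl | hn
  · exact wickMoment_zero (μ := μ) ▸ zero_le_one
  obtain ⟨i, hi⟩ := Function.ne_iff.1 hn
  have hle : Pi.single i 1 ≤ n :=
    update_le_iff.2 ⟨Nat.one_le_iff_ne_zero.2 hi, fun _ _ => Nat.zero_le _⟩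
  obtain ⟨n, rfl⟩ := le_iff_exists_add'.1 hle
  rw [wickMoment_add_single hmean]
  exact Finset.sum_nonneg fun j _ => mul_nonneg (hcov i j) <| mul_nonneg (Nat.cast_nonneg _) <|
    ih _ (tsub_le_self.trans_lt (lt_add_of_pos_right _ (Pi.single_pos.2 zero_lt_one)))

theorem covariance_mul_wickMoment_le [DecidableEq ι] (hmean : ∀ i, ∫ x, x i ∂μ = 0)
    (hcov : ∀ i j, 0 ≤ cov[fun x => x i, fun x => x j; μ]) (n : ι → ℕ) {i j : ι} (hij : i ≠ j) :
    cov[fun x => x i, fun x => x j; μ] * wickMoment μ n ≤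
      wickMoment μ (n + Pi.single j 1 + Pi.single i 1) := by
  have hnonneg := wickMoment_nonneg hmean hcov
  have hsummand : ∀ k, 0 ≤ cov[fun x => x i, fun x => x k; μ] *
      ((n + Pi.single j 1 : ι → ℕ) k * wickMoment μ (n + Pi.single j 1 - Pi.single k 1)) :=
    fun k => mul_nonneg (hcov i k) (mul_nonneg (Nat.cast_nonneg _) (hnonneg _))
  calc cov[fun x => x i, fun x => x j; μ] * wickMoment μ n
      ≤ cov[fun x => x i, fun x => x j; μ] * (((n + Pi.single j 1 : ι → ℕ) j : ℝ) *
          wickMoment μ (n + Pi.single j 1 - Pi.single j 1)) := by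
        rw [add_tsub_cancel_right, Pi.add_apply, Pi.single_eq_same, Nat.cast_succ]
        exact mul_le_mul_of_nonneg_left
          (le_mul_of_one_le_left (hnonneg n) (le_add_of_nonneg_left (Nat.cast_nonneg _))) (hcov i j)
    _ ≤ wickMoment μ (n + Pi.single j 1 + Pi.single i 1) := by
        rw [wickMoment_add_single hmean]
        exact Finset.single_le_sum (fun k _ => hsummand k)
          (Finset.mem_erase.2 ⟨hij.symm, Finset.mem_univ j⟩)

theorem prod_covariance_le_wickMoment [DecidableEq ι] (hmean : ∀ i, ∫ x, x i ∂μ = 0)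
    (hcov : ∀ i j, 0 ≤ cov[fun x => x i, fun x => x j; μ]) {κ : Type*} (A : Finset κ)
    {e f : κ → ι} (hef : ∀ k, e k ≠ f k) :
    ∏ k ∈ A, cov[fun x => x (e k), fun x => x (f k); μ] ≤
      wickMoment μ (∑ k ∈ A, (Pi.single (f k) 1 + Pi.single (e k) 1)) := by
  classical
  induction A using Finset.induction_on with
  | empty => simp [wickMoment_zero]
  | insert k A hk ih =>
    rw [Finset.prod_insert hk, Finset.sum_insert hk, add_comm (Pi.single _ _ + _), ← add_assoc]
    exact (mul_le_mul_of_nonneg_left ih (hcov _ _)).trans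
      (covariance_mul_wickMoment_le hmean hcov _ (hef k))

theorem pow_le_wickMoment_two_mul (hmean : ∀ i, ∫ x, x i ∂μ = 0)
    (hcov : ∀ i j, 0 ≤ cov[fun x => x i, fun x => x j; μ]) {σ : Equiv.Perm ι}
    (hσ : σ ∈ derangements ι) {c : ℝ} (hc : 0 ≤ c)
    (hσ_cov : ∀ i, c ≤ cov[fun x => x i, fun x => x (σ i); μ]) (M : ℕ) :
    c ^ (M * Fintype.card ι) ≤ wickMoment μ (fun _ => 2 * M) := by
  classical
  have hdegree : ∑ k : Fin M × ι, (Pi.single (σ k.2) 1 + Pi.single k.2 1) = fun _ : ι => 2 * M := by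
    have hone : ∑ i : ι, Pi.single i 1 = (1 : ι → ℕ) := Finset.univ_sum_single 1
    have hsum : ∑ i, (Pi.single (σ i) 1 + Pi.single i 1) = (1 + 1 : ι → ℕ) := by
      rw [Finset.sum_add_distrib, Equiv.sum_comp σ fun i => Pi.single i 1, hone]
    rw [Fintype.sum_prod_type, Finset.sum_congr rfl fun _ _ => hsum]
    ext i
    simp [mul_comm]
  calc c ^ (M * Fintype.card ι) = ∏ _k : Fin M × ι, c := by simp
    _ ≤ ∏ k : Fin M × ι, cov[fun x => x k.2, fun x => x (σ k.2); μ] :=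
        Finset.prod_le_prod (fun _ _ => hc) fun k _ => hσ_cov k.2
    _ ≤ wickMoment μ (∑ k : Fin M × ι, (Pi.single (σ k.2) 1 + Pi.single k.2 1)) :=
        prod_covariance_le_wickMoment hmean hcov _ fun k => (hσ k.2).symm
    _ = wickMoment μ (fun _ => 2 * M) := by rw [hdegree]

theorem wickMoment_le_integral_prod_sum (hmean : ∀ i, ∫ x, x i ∂μ = 0)
    (hcov : ∀ i j, 0 ≤ cov[fun x => x i, fun x => x j; μ]) {S : ι → Finset ℕ} {n : ι → ℕ}
    (hn : ∀ i, n i ∈ S i) :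
    wickMoment μ n ≤
      ∫ x, ∏ i, ∑ k ∈ S i, (wickPolynomial Var[fun y => y i; μ] k).eval (x i) ∂μ := by
  classical
  calc wickMoment μ n ≤ ∑ p ∈ Fintype.piFinset S, wickMoment μ p :=
        Finset.single_le_sum (fun p _ => wickMoment_nonneg hmean hcov p)
          (Fintype.mem_piFinset.2 hn)
    _ = _ := by
        simp only [wickMoment, Finset.prod_univ_sum, ← eval_wickMonomial]
        rw [integral_finsetSum _ fun p _ => integrable_eval_of_isGaussian _]

end WickMoment

section Clusters

theorem nonempty_derangements (α : Type*) [Countable α] [Nontrivial α] :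
    (derangements α).Nonempty := by
  obtain ⟨σ, hσ, -⟩ := (Set.countable_univ (α := α)).exists_cycleOn
  exact ⟨σ, fun a => hσ.apply_ne Set.nontrivial_univ (Set.mem_univ a)⟩

theorem exists_derangement_rel {α : Type*} [Countable α] (S : Setoid α)
    (h : ∀ a, ∃ b, b ≠ a ∧ S a b) : ∃ σ ∈ derangements α, ∀ a, S a (σ a) := by
  have hnontrivial : ∀ q : Quotient S, Nontrivial {a // Quotient.mk S a = q} := by
    rintro ⟨a⟩
    obtain ⟨b, hne, hab⟩ := h a
    exact ⟨⟨a, rfl⟩, ⟨b, (Quotient.sound hab).symm⟩,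
      fun heq => hne (congrArg Subtype.val heq).symm⟩
  choose τ hτ using fun q : Quotient S => nonempty_derangements {a // Quotient.mk S a = q}
  refine ⟨(Equiv.sigmaFiberEquiv (Quotient.mk S)).permCongr (Equiv.sigmaCongrRight τ),
    fun a heq => hτ _ ⟨a, rfl⟩ (Subtype.ext heq),
    fun a => Quotient.exact (τ _ ⟨a, rfl⟩).2.symm⟩

theorem dist_le_length_mul_of_walk {ι E : Type*} [PseudoMetricSpace E] {x : ι → E} {δ : ℝ}
    {G : SimpleGraph ι} (hG : ∀ i j, G.Adj i j → dist (x i) (x j) ≤ δ) {i j : ι}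
    (p : G.Walk i j) : dist (x i) (x j) ≤ p.length * δ := by
  induction p with
  | nil => simp
  | @cons i k j hik p ih =>
    calc dist (x i) (x j) ≤ dist (x i) (x k) + dist (x k) (x j) := dist_triangle _ _ _
      _ ≤ δ + p.length * δ := add_le_add (hG i k hik) ih
      _ = _ := by rw [SimpleGraph.Walk.length_cons]; push_cast; ring

theorem symm_dist_le {ι E : Type*} [PseudoMetricSpace E] (x : ι → E) (δ : ℝ) :
    Std.Symm fun i j => dist (x i) (x j) ≤ δ :=
  ⟨fun i j hij => dist_comm (x i) (x j) ▸ hij⟩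

theorem equivalence_reflTransGen_dist_le {ι E : Type*} [PseudoMetricSpace E] (x : ι → E) (δ : ℝ) :
    Equivalence (Relation.ReflTransGen fun i j => dist (x i) (x j) ≤ δ) :=
  have := symm_dist_le x δ
  ⟨fun _ => .refl, Relation.ReflTransGen.stdSymm.symm _ _, .trans⟩

theorem dist_le_card_mul_of_reflTransGen {ι E : Type*} [Fintype ι] [PseudoMetricSpace E]
    {x : ι → E} {δ : ℝ} (hδ : 0 ≤ δ) {i j : ι}
    (h : Relation.ReflTransGen (fun i j => dist (x i) (x j) ≤ δ) i j) :
    dist (x i) (x j) ≤ Fintype.card ι * δ := by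
  rw [← SimpleGraph.reachable_fromEdgeSet_fromRel_eq_reflTransGen (symm_dist_le x δ)] at h
  obtain ⟨p, hp⟩ := h.exists_isPath
  have hlength := dist_le_length_mul_of_walk (x := x) (δ := δ)
    (fun k l hkl => ((SimpleGraph.fromEdgeSet_adj _).1 hkl).1) p
  exact hlength.trans (mul_le_mul_of_nonneg_right (Nat.cast_le.2 hp.length_lt.le) hδ)

end Clusters

section AnisotropicMetric

variable {d : ℕ} {s : Fin d → ℝ}

theorem anorm_zero (hs : ∀ j, 1 ≤ s j) : anorm s 0 = 0 :=
  Finset.sum_eq_zero fun j _ => by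
    rw [Pi.zero_apply, abs_zero,
      Real.zero_rpow (one_div_pos.2 (zero_lt_one.trans_le (hs j))).ne']

theorem anorm_sub_comm (x y : Fin d → ℝ) : anorm s (x - y) = anorm s (y - x) := by
  simp only [anorm, Pi.sub_apply, abs_sub_comm]

theorem anorm_add_le (hs : ∀ j, 1 ≤ s j) (x y : Fin d → ℝ) :
    anorm s (x + y) ≤ anorm s x + anorm s y := by
  rw [anorm, anorm, anorm, ← Finset.sum_add_distrib]
  refine Finset.sum_le_sum fun j _ => ?_
  have hpos : 0 < s j := zero_lt_one.trans_le (hs j)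
  calc |(x + y) j| ^ (1 / s j) ≤ (|x j| + |y j|) ^ (1 / s j) :=
        Real.rpow_le_rpow (abs_nonneg _) (abs_add_le _ _) (one_div_pos.2 hpos).le
    _ ≤ |x j| ^ (1 / s j) + |y j| ^ (1 / s j) :=
        Real.rpow_add_le_add_rpow (abs_nonneg _) (abs_nonneg _) (one_div_pos.2 hpos).le
          ((div_le_one hpos).2 (hs j))

/-- The metric `|x - y|_s` on `ℝ^d`. It is not an instance, as `Fin d → ℝ` already carries the sup
metric. -/
abbrev anisotropicMetric (hs : ∀ j, 1 ≤ s j) : PseudoMetricSpace (Fin d → ℝ) where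
  dist x y := anorm s (x - y)
  dist_self x := by rw [sub_self, anorm_zero hs]
  dist_comm := anorm_sub_comm
  dist_triangle x y z := by simpa using anorm_add_le hs (x - y) (y - z)

end AnisotropicMetric

theorem inv_mul_rpow_le_div_mul_rpow {α Λ ε k r : ℝ} (hα : 0 ≤ α) (hΛ : 0 < Λ) (hε : 0 < ε)
    (hr : 0 ≤ r) (hrk : r ≤ k * ε) :
    (Λ * (k + 1) ^ α)⁻¹ ≤ ε ^ α / (Λ * (r + ε) ^ α) := by
  have hk : 0 ≤ k := nonneg_of_mul_nonneg_left (hr.trans hrk) hε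
  calc (Λ * (k + 1) ^ α)⁻¹ = ε ^ α / (Λ * (k * ε + ε) ^ α) := by
        rw [← add_one_mul, Real.mul_rpow (by positivity) hε.le]
        field_simp
    _ ≤ ε ^ α / (Λ * (r + ε) ^ α) := by gcongr

namespace IsCenteredGaussianFamily

variable {Ω ι : Type*} [MeasurableSpace Ω] {P : Measure Ω} {X : ι → Ω → ℝ}

theorem exists_map_eq_gaussianReal (hX : IsCenteredGaussianFamily P X) (i : ι) :
    ∃ v : NNReal, P.map (X i) = gaussianReal 0 v := by
  simpa using hX {i} fun _ => 1

theorem aemeasurable (hX : IsCenteredGaussianFamily P X) (i : ι) : AEMeasurable (X i) P := by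
  obtain ⟨v, hv⟩ := hX.exists_map_eq_gaussianReal i
  exact AEMeasurable.of_map_ne_zero (hv ▸ IsProbabilityMeasure.ne_zero _)

theorem integral_eq_zero (hX : IsCenteredGaussianFamily P X) (i : ι) : ∫ ω, X i ω ∂P = 0 := by
  obtain ⟨v, hv⟩ := hX.exists_map_eq_gaussianReal i
  rw [← integral_id_gaussianReal (μ := 0) (v := v), ← hv, integral_map (hX.aemeasurable i)
    (by fun_prop)]

theorem covariance_eq_integral_mul (hX : IsCenteredGaussianFamily P X) (i j : ι) :
    cov[X i, X j; P] = ∫ ω, X i ω * X j ω ∂P := by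
  simp only [covariance, hX.integral_eq_zero, sub_zero]

theorem hasGaussianLaw [Finite ι] (hX : IsCenteredGaussianFamily P X) :
    HasGaussianLaw (fun ω i => X i ω) P := by
  classical
  cases nonempty_fintype ι
  refine ⟨isGaussian_of_map_eq_gaussianReal fun M => ?_⟩
  obtain ⟨v, hv⟩ := hX Finset.univ fun i => M fun j => if i = j then 1 else 0
  refine ⟨0, v, ?_⟩
  rw [AEMeasurable.map_map_of_aemeasurable (by fun_prop) (aemeasurable_pi_lambda _ hX.aemeasurable),
    ← hv]
  exact congrArg (Measure.map · P) <| funext fun ω =>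
    ((M : (ι → ℝ) →ₗ[ℝ] ℝ).pi_apply_eq_sum_univ _).trans (by simp [mul_comm])

theorem integral_eval_map_eq_zero [Countable ι] (hX : IsCenteredGaussianFamily P X) (i : ι) :
    ∫ x, x i ∂P.map (fun ω i => X i ω) = 0 := by
  rw [integral_map (aemeasurable_pi_lambda _ hX.aemeasurable)
    (measurable_pi_apply i).aestronglyMeasurable, hX.integral_eq_zero]

theorem covariance_eval_map [Countable ι] (hX : IsCenteredGaussianFamily P X) (i j : ι) :
    cov[fun x => x i, fun x => x j; P.map fun ω i => X i ω] = ∫ ω, X i ω * X j ω ∂P := by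
  rw [covariance_map (measurable_pi_apply i).aestronglyMeasurable
    (measurable_pi_apply j).aestronglyMeasurable (aemeasurable_pi_lambda _ hX.aemeasurable)]
  exact hX.covariance_eq_integral_mul i j

theorem variance_eval_map [Countable ι] (hX : IsCenteredGaussianFamily P X) (i : ι) :
    Var[fun x => x i; P.map fun ω i => X i ω] = ∫ ω, X i ω ^ 2 ∂P := by
  rw [← covariance_self (measurable_pi_apply i).aemeasurable, hX.covariance_eval_map]
  simp only [sq]

theorem pow_le_integral_prod_wick_add_wick [Fintype ι] (hX : IsCenteredGaussianFamily P X)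
    (hvar : ∀ i, 0 < ∫ ω, X i ω ^ 2 ∂P) (hcov : ∀ i j, 0 ≤ ∫ ω, X i ω * X j ω ∂P)
    {σ : Equiv.Perm ι} (hσ : σ ∈ derangements ι) {c : ℝ} (hc : 0 ≤ c)
    (hσ_cov : ∀ i, c ≤ ∫ ω, X i ω * X (σ i) ω ∂P) (m : ℕ) :
    c ^ ((m + 1) / 2 * Fintype.card ι) ≤
      ∫ ω, ∏ i, (wick (∫ ω', X i ω' ^ 2 ∂P) m (X i ω) +
        wick (∫ ω', X i ω' ^ 2 ∂P) (m + 1) (X i ω)) ∂P := by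
  have := hX.hasGaussianLaw.isGaussian_map
  have heven : 2 * ((m + 1) / 2) ∈ ({m, m + 1} : Finset ℕ) := by
    rw [Finset.mem_insert, Finset.mem_singleton]; omega
  have hcov_law := hX.covariance_eval_map
  calc c ^ ((m + 1) / 2 * Fintype.card ι)
      ≤ wickMoment (P.map fun ω i => X i ω) fun _ => 2 * ((m + 1) / 2) :=
        pow_le_wickMoment_two_mul hX.integral_eval_map_eq_zero
          (fun i j => hcov_law i j ▸ hcov i j) hσ hc (fun i => hcov_law i (σ i) ▸ hσ_cov i) _
    _ ≤ _ := wickMoment_le_integral_prod_sum hX.integral_eval_map_eq_zero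
        (fun i j => hcov_law i j ▸ hcov i j) (S := fun _ => {m, m + 1}) fun _ => heven
    _ = _ := by
        rw [integral_map (aemeasurable_pi_lambda _ hX.aemeasurable)
          (Continuous.aestronglyMeasurable (by fun_prop))]
        simp only [Finset.sum_pair (Nat.lt_succ_self m).ne, hX.variance_eval_map,
          wick_eq_eval_wickPolynomial (hvar _)]

end IsCenteredGaussianFamily

theorem stmt16_general {ι E Ω : Type*} [Fintype ι] [PseudoMetricSpace E] {α Λ ε L : ℝ}
    (hα : 0 ≤ α) (hΛ : 0 < Λ) (hε : 0 < ε) (hL : 0 ≤ L) (m : ℕ) {x : ι → E}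
    (hclus : ∀ i, ∃ j, j ≠ i ∧ Relation.ReflTransGen (fun i j => dist (x i) (x j) ≤ L * ε) i j)
    [MeasurableSpace Ω] {P : Measure Ω} {X : ι → Ω → ℝ} (hX : IsCenteredGaussianFamily P X)
    (hlow : ∀ i j, ε ^ α / (Λ * (dist (x i) (x j) + ε) ^ α) ≤ ∫ ω, X i ω * X j ω ∂P) :
    (Λ * (Fintype.card ι * L + 1) ^ α) ^ (-((((m + 1) / 2 : ℕ) : ℤ) * Fintype.card ι)) ≤
      ∫ ω, ∏ i, (wick (∫ ω', X i ω' ^ 2 ∂P) m (X i ω) +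
        wick (∫ ω', X i ω' ^ 2 ∂P) (m + 1) (X i ω)) ∂P := by
  obtain ⟨σ, hσ, hσ_clus⟩ :=
    exists_derangement_rel ⟨_, equivalence_reflTransGen_dist_le x (L * ε)⟩ hclus
  have hpos : ∀ i j, 0 < ∫ ω, X i ω * X j ω ∂P := fun i j =>
    (by positivity : 0 < ε ^ α / (Λ * (dist (x i) (x j) + ε) ^ α)).trans_le (hlow i j)
  have hedge : ∀ i, (Λ * (Fintype.card ι * L + 1) ^ α)⁻¹ ≤ ∫ ω, X i ω * X (σ i) ω ∂P := fun i =>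
    (inv_mul_rpow_le_div_mul_rpow hα hΛ hε dist_nonneg ((mul_assoc _ L ε).symm ▸
      dist_le_card_mul_of_reflTransGen (mul_nonneg hL hε.le) (hσ_clus i))).trans (hlow i (σ i))
  rw [zpow_neg, ← Nat.cast_mul, zpow_natCast, ← inv_pow]
  exact hX.pow_le_integral_prod_wick_add_wick (fun i => by simpa only [sq] using hpos i i)
    (fun i j => (hpos i j).le) hσ (by positivity) hedge m

/-- lower bound (2.7): if every cluster at scale `Lε` has at least two
elements, then `(Λ(KL+1)^α)^{−⌊(m+1)/2⌋·K} ≤ E ∏_j (X_j^{⋄m} + X_j^{⋄(m+1)})`. -/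
theorem stmt16 (d : ℕ) (hd : 1 ≤ d) (s : Fin d → ℝ) (hs : ∀ j, 1 ≤ s j)
    (α Λ ε : ℝ) (hα : 0 < α) (hΛ : 1 < Λ) (hε : ε ∈ Set.Ioo (0:ℝ) 1)
    (K : ℕ) (hK : 1 ≤ K) (L : ℝ) (hL : 0 < L) (m : ℕ)
    (x : Fin K → Fin d → ℝ)
    (hclus : ∀ j, ∃ j', j' ≠ j ∧ SameCluster s (L * ε) x j j')
    (Ω : Type) [MeasurableSpace Ω] (P : Measure Ω) [IsProbabilityMeasure P]
    (X : Fin K → Ω → ℝ) (hGauss : IsCenteredGaussianFamily P X)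
    (hlow : ∀ i j, ε ^ α / (Λ * (anorm s (x i - x j) + ε) ^ α) ≤ ∫ ω, X i ω * X j ω ∂P)
    (hup : ∀ i j, (∫ ω, X i ω * X j ω ∂P) ≤ Λ * ε ^ α / (anorm s (x i - x j) + ε) ^ α) :
    (Λ * ((K : ℝ) * L + 1) ^ α) ^ (-((((m + 1) / 2 : ℕ) : ℤ) * K)) ≤
      ∫ ω, ∏ j, (wick (∫ ω', X j ω' ^ 2 ∂P) m (X j ω) +
        wick (∫ ω', X j ω' ^ 2 ∂P) (m + 1) (X j ω)) ∂P := by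
  let := anisotropicMetric hs
  simpa only [Fintype.card_fin] using
    stmt16_general (x := x) hα.le (zero_lt_one.trans hΛ) hε.1 hL.le m hclus hGauss hlow
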